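/- arXiv:2508.05980 — 3 statements merged into one kernel-verified Lean document; each statement's English description precedes it below -/
import Mathlib

section
/- Let s ≥ 2 and 2 ≤ r' ≤ s' be integers with s' − r' < 2(s − 1), and let F : U → ℂ^{r'×s'} be a local orthogonal map in chart form from 𝒢(1,s) to 𝒢(r',s'). Assume F is non-null, i.e. there exists z₁ ∈ U with F(z₁)·F(z₁)ᴴ ≠ I_{r'}. Then there exists a ℂ-linear subspace N ⊆ ℂ^{r'+s'} of dimension r' − 1 which is totally isotropic for ⟨·,·⟩_{r',s'} (i.e. ⟨u,v⟩_{r',s'} = 0 for all u, v ∈ N) and which satisfies N ⊆ rowSpan([I_{r'} | F(z)]) for every z ∈ U. -/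
open scoped BigOperators
open Matrix

noncomputable section

/-- Hermitian dot product of row vectors: `z ⬝ wᴴ`. -/
def cdot {n : ℕ} (z w : Fin n → ℂ) : ℂ := ∑ i, z i * (starRingEnd ℂ) (w i)

/-- The indefinite Hermitian inner product of signature `(a,b)` on `ℂ^{a+b}`. -/
def iip (a b : ℕ) (z w : Fin (a + b) → ℂ) : ℂ :=
  ∑ i : Fin (a + b), (if (i : ℕ) < a then (1 : ℂ) else -1) * z i * (starRingEnd ℂ) (w i)

/-- Row span of a matrix: the ℂ-linear span of its rows. -/
def rowSpan {m n : ℕ} (A : Matrix (Fin m) (Fin n) ℂ) : Submodule ℂ (Fin n → ℂ) :=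
  Submodule.span ℂ (Set.range fun i => A i)

/-- The chart matrix `[I_r | Z]`. -/
def chartMat (r s : ℕ) (Z : Matrix (Fin r) (Fin s) ℂ) : Matrix (Fin r) (Fin (r + s)) ℂ :=
  Matrix.of fun i j =>
    if h : (j : ℕ) < r then (if (i : ℕ) = (j : ℕ) then 1 else 0)
    else Z i ⟨(j : ℕ) - r, by have := j.isLt; omega⟩

/-!
Write `F'` for the derivative of `F`. Differentiating the orthogonality relation twice at a null
point `z` gives, for `u, v ⊥ z`, `⟨F'(z)u i, F'(z)v j⟩ = ⟨u, v⟩ G i j` with `G` depending only on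
`z`, while all these vectors are orthogonal to the orthonormal rows of `F z`. An invertible `2 × 2`
principal block of `G` would therefore produce `2(s - 1) + r'` independent vectors in `ℂ^{s'}`; as
this exceeds `s'`, the rows of `F'(z)u` are pairwise proportional for every `u ⊥ z`.

To pass from tangential to radial directions, fill `U` near the sphere by discs `x + ωe` whose
boundary circles consist of null points, and apply the maximum principle along them to quantities
evaluated at tangent vectors depending holomorphically on `ω` and equal to `x` at the centre. It
follows that the rows of `F'(z)u` are proportional for all `z` and `u`, with a ratio independent of
`u`. Symmetry of second derivatives makes this ratio locally constant, so `F` moves along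
`F z₀ + c ⊗ x` with `c` fixed. The combinations of the rows of `[I | F z]` with coefficients
orthogonal to `c` do not depend on `z`, and they are isotropic because `F z₀` is null.
-/

open Metric Set Filter Topology
open scoped ComplexOrder

section SeveralVariables

variable {E V : Type*} [NormedAddCommGroup E] [NormedSpace ℂ E]
  [NormedAddCommGroup V] [NormedSpace ℂ V]

theorem norm_fderiv_le_of_forall_mem_ball {g : E → V} {x y : E} {r C : ℝ} (hr : 0 < r)
    (hg : DifferentiableOn ℂ g (ball x (2 * r))) (hC : ∀ w ∈ ball x (2 * r), ‖g w‖ ≤ C)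
    (hy : y ∈ ball x r) : ‖fderiv ℂ g y‖ ≤ 2 * C / r := by
  have hsub : ball y r ⊆ ball x (2 * r) :=
    ball_subset_ball' (by linarith [mem_ball.1 hy])
  refine Complex.norm_fderiv_le_div_of_mapsTo_ball (hg.mono hsub) (fun w hw => ?_) hr
  rw [mem_closedBall_iff_norm]
  linarith [norm_sub_le (g w) (g y), hC w (hsub hw), hC y (hsub (mem_ball_self hr))]

theorem uniformCauchySeqOn_fderiv_of_differentiableOn {ι : Type*} {l : Filter ι} {F : ι → E → V}
    {x : E} {r : ℝ} (hr : 0 < r) (hF : ∀ᶠ n in l, DifferentiableOn ℂ (F n) (ball x (2 * r)))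
    (hCauchy : UniformCauchySeqOn F l (ball x (2 * r))) :
    UniformCauchySeqOn (fun n => fderiv ℂ (F n)) l (ball x r) := by
  intro u hu
  obtain ⟨ε, hε, hεu⟩ := Metric.mem_uniformity_dist.1 hu
  filter_upwards [hCauchy _ (Metric.dist_mem_uniformity (show 0 < ε * r / 4 by positivity)),
    hF.prod_mk hF] with ⟨m, n⟩ hmn ⟨hm, hn⟩ y hy
  have hball : ball x (2 * r) ∈ 𝓝 y :=
    isOpen_ball.mem_nhds (ball_subset_ball (by linarith) hy)
  refine hεu ?_
  rw [dist_eq_norm, ← fderiv_sub (hm.differentiableAt hball) (hn.differentiableAt hball)]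
  calc ‖fderiv ℂ (F m - F n) y‖ ≤ 2 * (ε * r / 4) / r :=
        norm_fderiv_le_of_forall_mem_ball hr (hm.sub hn)
          (fun w hw => (dist_eq_norm (F m w) (F n w)).symm.trans_le (hmn w hw).le) hy
    _ = ε / 2 := by field_simp; norm_num
    _ < ε := half_lt_self hε

theorem differentiableAt_of_tendstoUniformlyOn_ball [CompleteSpace V] {ι : Type*} {l : Filter ι}
    [l.NeBot] {F : ι → E → V} {f : E → V} {x : E} {r : ℝ} (hr : 0 < r)
    (hF : ∀ᶠ n in l, DifferentiableOn ℂ (F n) (ball x (2 * r)))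
    (hlim : TendstoUniformlyOn F f l (ball x (2 * r))) : DifferentiableAt ℂ f x := by
  have hx : ball x r ∈ 𝓝 x := ball_mem_nhds x hr
  have hsub : ball x r ⊆ ball x (2 * r) := ball_subset_ball (by linarith)
  have hCauchy := uniformCauchySeqOn_fderiv_of_differentiableOn hr hF hlim.uniformCauchySeqOn
  choose! G hG using fun y (hy : y ∈ ball x r) =>
    cauchy_map_iff_exists_tendsto.1 (hCauchy.cauchy_map hy)
  have hder : ∀ᶠ p : ι × E in l ×ˢ 𝓝 x, HasFDerivAt (F p.1) (fderiv ℂ (F p.1) p.2) p.2 := by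
    filter_upwards [hF.prod_mk hx] with p hp
    exact (hp.1.differentiableAt (isOpen_ball.mem_nhds (hsub hp.2))).hasFDerivAt
  refine (hasFDerivAt_of_tendstoUniformlyOnFilter (f := F) (f' := fun n => fderiv ℂ (F n))
    (g' := G) ?_ hder ?_).differentiableAt
  · exact (hCauchy.tendstoUniformlyOn_of_tendsto hG).tendstoUniformlyOnFilter.mono_right
      (le_principal_iff.2 hx)
  · filter_upwards [hx] with y hy
    exact hlim.tendsto_at (hsub hy)

theorem norm_dslope_sub_deriv_le [CompleteSpace V] {h : ℂ → V} {c t : ℂ} {R M : ℝ}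
    (hd : DifferentiableOn ℂ h (ball c R)) (hM : MapsTo h (ball c R) (closedBall (h c) M))
    (ht : t ∈ ball c R) : ‖dslope h c t - deriv h c‖ ≤ 2 * (M / R) / R * ‖t - c‖ := by
  have hc : ball c R ∈ 𝓝 c := ball_mem_nhds c (pos_of_mem_ball ht)
  have hbound : ∀ w ∈ ball c R, ‖dslope h c w‖ ≤ M / R := fun w hw =>
    Complex.norm_dslope_le_div_of_mapsTo_ball hd hM hw
  have hmaps : MapsTo (dslope h c) (ball c R) (closedBall (dslope h c c) (2 * (M / R))) := by
    intro w hw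
    rw [mem_closedBall_iff_norm]
    linarith [norm_sub_le (dslope h c w) (dslope h c c), hbound w hw, hbound c (mem_of_mem_nhds hc)]
  simpa [dist_eq_norm] using Complex.dist_le_div_mul_dist_of_mapsTo_ball
    ((Complex.differentiableOn_dslope hc).2 hd) hmaps ht

theorem hasDerivAt_comp_line {f : E → V} {z : E} (hf : DifferentiableAt ℂ f z) (v : E) :
    HasDerivAt (fun t : ℂ => f (z + t • v)) (fderiv ℂ f z v) 0 :=
  hf.hasFDerivAt.hasLineDerivAt v

theorem mapsTo_line_ball (x v : E) {r : ℝ} {z : E} (hz : z ∈ ball x r) :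
    MapsTo (fun t : ℂ => z + t • v) (ball 0 (r / (‖v‖ + 1))) (ball x (2 * r)) := by
  intro t ht
  have htv : ‖t • v‖ ≤ r := by
    rw [mem_ball_zero_iff, lt_div_iff₀ (by positivity)] at ht
    rw [norm_smul]
    linarith [norm_nonneg t]
  rw [mem_ball_iff_norm] at hz ⊢
  rw [add_sub_right_comm]
  linarith [norm_add_le (z - x) (t • v)]

theorem norm_slope_line_sub_fderiv_le [CompleteSpace V] {f : E → V} {x v z : E} {r C : ℝ}
    (hr : 0 < r) (hf : DifferentiableOn ℂ f (ball x (2 * r)))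
    (hC : ∀ w ∈ ball x (2 * r), ‖f w‖ ≤ C) (hz : z ∈ ball x r) {t : ℂ} (ht0 : t ≠ 0)
    (ht : t ∈ ball (0 : ℂ) (r / (‖v‖ + 1))) :
    ‖t⁻¹ • (f (z + t • v) - f z) - fderiv ℂ f z v‖ ≤
      2 * (2 * C / (r / (‖v‖ + 1))) / (r / (‖v‖ + 1)) * ‖t‖ := by
  have hz2 : z ∈ ball x (2 * r) := ball_subset_ball (by linarith) hz
  have hline := mapsTo_line_ball x v hz
  have hmaps : MapsTo (fun t : ℂ => f (z + t • v)) (ball 0 (r / (‖v‖ + 1)))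
      (closedBall (f (z + (0 : ℂ) • v)) (2 * C)) := by
    intro w hw
    rw [zero_smul, add_zero, mem_closedBall_iff_norm]
    linarith [norm_sub_le (f (z + w • v)) (f z), hC _ (hline hw), hC z hz2]
  have hderiv := hasDerivAt_comp_line (hf.differentiableAt (isOpen_ball.mem_nhds hz2)) v
  have hdiff : DifferentiableOn ℂ (fun t : ℂ => f (z + t • v)) (ball 0 (r / (‖v‖ + 1))) :=
    hf.comp (by fun_prop : Differentiable ℂ fun t : ℂ => z + t • v).differentiableOn hline
  simpa [hderiv.deriv, dslope_of_ne _ ht0, slope_def_module] using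
    norm_dslope_sub_deriv_le hdiff hmaps ht

theorem tendstoUniformlyOn_slope_line [CompleteSpace V] {f : E → V} {x : E} {r C : ℝ} (hr : 0 < r)
    (hf : DifferentiableOn ℂ f (ball x (2 * r))) (hC : ∀ z ∈ ball x (2 * r), ‖f z‖ ≤ C) (v : E) :
    TendstoUniformlyOn (fun (t : ℂ) z => t⁻¹ • (f (z + t • v) - f z))
      (fun z => fderiv ℂ f z v) (𝓝[≠] 0) (ball x r) := by
  rw [Metric.tendstoUniformlyOn_iff]
  intro ε hε
  set R := r / (‖v‖ + 1)
  have hlim : Tendsto (fun t : ℂ => 2 * (2 * C / R) / R * ‖t‖) (𝓝[≠] 0) (𝓝 0) := by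
    have : Continuous fun t : ℂ => 2 * (2 * C / R) / R * ‖t‖ := by fun_prop
    simpa using (this.tendsto 0).mono_left nhdsWithin_le_nhds
  filter_upwards [hlim.eventually_lt_const hε, self_mem_nhdsWithin,
    nhdsWithin_le_nhds (ball_mem_nhds (0 : ℂ) (by positivity : 0 < R))] with t htε ht0 ht z hz
  rw [dist_eq_norm, norm_sub_rev]
  exact (norm_slope_line_sub_fderiv_le hr hf hC hz ht0 ht).trans_lt htε

theorem differentiableOn_fderiv_apply [CompleteSpace V] {U : Set E} (hU : IsOpen U) {f : E → V}
    (hf : DifferentiableOn ℂ f U) (v : E) : DifferentiableOn ℂ (fun z => fderiv ℂ f z v) U := by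
  intro x hx
  obtain ⟨r, hr, hsub, C, hC⟩ : ∃ r > 0, ball x (2 * (2 * r)) ⊆ U ∧
      ∃ C, ∀ z ∈ ball x (2 * (2 * r)), ‖f z‖ ≤ C := by
    have hcont := (hf.differentiableAt (hU.mem_nhds hx)).continuousAt
    obtain ⟨ε, hε, h⟩ := Metric.mem_nhds_iff.1 (inter_mem (hU.mem_nhds hx)
      (hcont.norm.eventually_le_const (lt_add_one ‖f x‖)))
    refine ⟨ε / 4, by positivity, ?_⟩
    rw [show 2 * (2 * (ε / 4)) = ε by ring]
    exact ⟨fun z hz => (h hz).1, ‖f x‖ + 1, fun z hz => (h hz).2⟩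
  have hfb := hf.mono hsub
  refine (differentiableAt_of_tendstoUniformlyOn_ball hr ?_
    (tendstoUniformlyOn_slope_line (by positivity) hfb hC v)).differentiableWithinAt
  filter_upwards [nhdsWithin_le_nhds (ball_mem_nhds (0 : ℂ)
    (by positivity : 0 < 2 * r / (‖v‖ + 1)))] with t ht
  have hshift : MapsTo (fun z => z + t • v) (ball x (2 * r)) (ball x (2 * (2 * r))) := fun z hz =>
    mapsTo_line_ball x v hz ht
  exact ((hfb.comp (by fun_prop : Differentiable ℂ fun z => z + t • v).differentiableOn hshift).sub
    (hfb.mono (ball_subset_ball (by linarith)))).const_smul t⁻¹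

theorem differentiableOn_fderiv [FiniteDimensional ℂ E] [CompleteSpace V] {U : Set E}
    (hU : IsOpen U) {f : E → V} (hf : DifferentiableOn ℂ f U) :
    DifferentiableOn ℂ (fderiv ℂ f) U := by
  let e : E ≃L[ℂ] (Fin (Module.finrank ℂ E) → ℂ) :=
    ContinuousLinearEquiv.ofFinrankEq (Module.finrank_fin_fun ℂ).symm
  let Φ := (e.arrowCongr (1 : V ≃L[ℂ] V)).trans (ContinuousLinearEquiv.piRing _)
  rw [← Φ.comp_differentiableOn_iff]
  exact differentiableOn_pi.2 fun i => differentiableOn_fderiv_apply hU hf _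

theorem differentiableOn_fderiv_uncurry [FiniteDimensional ℂ E] [CompleteSpace V] {U : Set E}
    (hU : IsOpen U) {f : E → V} (hf : DifferentiableOn ℂ f U) :
    DifferentiableOn ℂ (fun q : E × E => fderiv ℂ f q.1 q.2) (U ×ˢ univ) :=
  ((differentiableOn_fderiv hU hf).comp differentiableOn_fst fun _ hq => hq.1).clm_apply
    differentiableOn_snd

theorem eqOn_zero_ball_of_eventuallyEq_zero [CompleteSpace V] {h : E → V} {y : E} {r : ℝ}
    (hh : DifferentiableOn ℂ h (ball y r)) (hy : h =ᶠ[𝓝 y] 0) : EqOn h 0 (ball y r) := by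
  intro w hw
  rcases eq_or_ne w y with rfl | hne
  · exact hy.self_of_nhds
  set L : ℂ → E := fun t => y + t • (w - y) with hL
  have hmaps : MapsTo L (ball 0 (r / ‖w - y‖)) (ball y r) := by
    intro t ht
    simpa [hL, norm_smul, lt_div_iff₀, norm_pos_iff, sub_ne_zero.2 hne] using ht
  have hdiff : DifferentiableOn ℂ (h ∘ L) (ball 0 (r / ‖w - y‖)) :=
    hh.comp (by fun_prop : Differentiable ℂ L).differentiableOn hmaps
  have hr : 1 < r / ‖w - y‖ := by
    rwa [one_lt_div (norm_pos_iff.2 (sub_ne_zero.2 hne)), ← mem_ball_iff_norm]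
  have hzero : h ∘ L =ᶠ[𝓝 0] 0 :=
    ((by fun_prop : Continuous L).tendsto' 0 y (by simp [hL])).eventually hy
  simpa [hL] using (hdiff.analyticOnNhd isOpen_ball).eqOn_zero_of_preconnected_of_eventuallyEq_zero
    (convex_ball _ _).isPreconnected (mem_ball_self (by linarith)) hzero
    (show (1 : ℂ) ∈ ball 0 (r / ‖w - y‖) by simpa using hr)

theorem eqOn_zero_of_isPreconnected_of_eventuallyEq_zero [CompleteSpace V] {U : Set E}
    (hU : IsOpen U) (hc : IsPreconnected U) {h : E → V} (hh : DifferentiableOn ℂ h U) {x : E}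
    (hx : x ∈ U) (hz : h =ᶠ[𝓝 x] 0) : EqOn h 0 U := by
  have hsub : U ⊆ {y | h =ᶠ[𝓝 y] 0} := by
    refine hc.subset_of_closure_inter_subset isOpen_setOfPred_eventually_nhds ⟨x, hx, hz⟩ ?_
    rintro y ⟨hy, hyU⟩
    obtain ⟨ε, hε, hεU⟩ := Metric.isOpen_iff.1 hU y hyU
    obtain ⟨w, hw, hyw⟩ := Metric.mem_closure_iff.1 hy (ε / 2) (half_pos hε)
    have hball : ball w (ε / 2) ⊆ U := (ball_subset_ball' (by linarith [dist_comm y w])).trans hεU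
    exact (eqOn_zero_ball_of_eventuallyEq_zero (hh.mono hball) hw).eventuallyEq_of_mem
      (isOpen_ball.mem_nhds (mem_ball.2 hyw))
  exact fun y hy => (hsub hy).self_of_nhds

theorem fderiv_fderiv_apply_comm [FiniteDimensional ℂ E] [CompleteSpace V] {U : Set E}
    (hU : IsOpen U) {f : E → V} (hf : DifferentiableOn ℂ f U) {z : E} (hz : z ∈ U) (v w : E) :
    fderiv ℂ (fderiv ℂ f) z v w = fderiv ℂ (fderiv ℂ f) z w v := by
  refine second_derivative_symmetric_of_eventually (f := f) (f' := fderiv ℂ f) ?_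
    ((differentiableOn_fderiv hU hf).differentiableAt (hU.mem_nhds hz)).hasFDerivAt v w
  filter_upwards [hU.mem_nhds hz] with y hy
  exact (hf.differentiableAt (hU.mem_nhds hy)).hasFDerivAt

-- Differentiating `Df = c • Dg` once more, the symmetry of both Hessians forces the tensor
-- `Dc ⊗ Dg` to be symmetric, which is incompatible with `Dg` having rank at least two.
theorem fderiv_ratio_eq_zero_of_linearIndependent [FiniteDimensional ℂ E] [CompleteSpace V]
    {U : Set E} (hU : IsOpen U) {f g : E → V} {c : E → ℂ} (hf : DifferentiableOn ℂ f U)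
    (hg : DifferentiableOn ℂ g U) {z : E} (hz : z ∈ U) (hc : DifferentiableAt ℂ c z)
    (hfg : ∀ y ∈ U, fderiv ℂ f y = c y • fderiv ℂ g y) {e₁ e₂ : E}
    (hli : LinearIndependent ℂ ![fderiv ℂ g z e₁, fderiv ℂ g z e₂]) : fderiv ℂ c z = 0 := by
  have hdg := ((differentiableOn_fderiv hU hg).differentiableAt (hU.mem_nhds hz)).hasFDerivAt
  have hd2 : fderiv ℂ (fderiv ℂ f) z =
      c z • fderiv ℂ (fderiv ℂ g) z + (fderiv ℂ c z).smulRight (fderiv ℂ g z) :=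
    ((hc.hasFDerivAt.smul hdg).congr_of_eventuallyEq
      (eventually_of_mem (hU.mem_nhds hz) hfg)).fderiv
  have hcross (v w : E) : fderiv ℂ c z v • fderiv ℂ g z w = fderiv ℂ c z w • fderiv ℂ g z v := by
    have hsymm := fderiv_fderiv_apply_comm hU hf hz v w
    simpa [hd2, fderiv_fderiv_apply_comm hU hg hz v w] using hsymm
  rw [LinearIndependent.pair_iff] at hli
  have he₁ : fderiv ℂ c z e₁ = 0 :=
    (hli (-fderiv ℂ c z e₂) (fderiv ℂ c z e₁) (by rw [neg_smul, hcross e₁ e₂, neg_add_cancel])).2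
  ext v
  exact (hli (fderiv ℂ c z v) 0 (by rw [hcross v e₁, he₁, zero_smul, zero_smul, add_zero])).1

theorem sub_smul_eq_of_fderiv_eq_smul [FiniteDimensional ℂ E] [CompleteSpace V] {U : Set E}
    (hU : IsOpen U) (hconn : IsPreconnected U) {f g : E → V} {c : E → ℂ}
    (hf : DifferentiableOn ℂ f U) (hg : DifferentiableOn ℂ g U) {z₀ : E} (hz₀ : z₀ ∈ U)
    (hc : ∀ᶠ z in 𝓝 z₀, DifferentiableAt ℂ c z)
    (hfg : ∀ᶠ z in 𝓝 z₀, fderiv ℂ f z = c z • fderiv ℂ g z) {e₁ e₂ : E}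
    (hli : LinearIndependent ℂ ![fderiv ℂ g z₀ e₁, fderiv ℂ g z₀ e₂]) {z : E} (hz : z ∈ U) :
    f z - c z₀ • g z = f z₀ - c z₀ • g z₀ := by
  have hdiff : DifferentiableOn ℂ (fun z => f z - c z₀ • g z) U :=
    hf.sub (hg.fun_const_smul (c z₀))
  have hli' : ∀ᶠ z in 𝓝 z₀, LinearIndependent ℂ ![fderiv ℂ g z e₁, fderiv ℂ g z e₂] := by
    have hcont := ((differentiableOn_fderiv hU hg).differentiableAt (hU.mem_nhds hz₀)).continuousAt
    have hpair : ContinuousAt (fun z => ![fderiv ℂ g z e₁, fderiv ℂ g z e₂]) z₀ := by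
      fun_prop
    exact hpair.eventually (isOpen_setOfPred_linearIndependent.mem_nhds hli)
  obtain ⟨ε, hε, hball⟩ := Metric.eventually_nhds_iff_ball.1
    ((hU.eventually_mem hz₀).and (hc.and (hfg.and hli')))
  have hball₀ := mem_ball_self (x := z₀) hε
  have hsub : ball z₀ ε ⊆ U := fun w hw => (hball w hw).1
  have hc_zero : ∀ w ∈ ball z₀ ε, fderiv ℂ c w = 0 := fun w hw =>
    fderiv_ratio_eq_zero_of_linearIndependent isOpen_ball (hf.mono hsub) (hg.mono hsub) hw
      (hball w hw).2.1 (fun y hy => (hball y hy).2.2.1) (hball w hw).2.2.2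
  have hc_const : ∀ w ∈ ball z₀ ε, c w = c z₀ := fun w hw =>
    isOpen_ball.is_const_of_fderiv_eq_zero (convex_ball _ _).isPreconnected
      (fun y hy => (hball y hy).2.1.differentiableWithinAt) hc_zero hw hball₀
  have hzero : ∀ w ∈ ball z₀ ε, fderiv ℂ (fun z => f z - c z₀ • g z) w = 0 := by
    intro w hw
    have hwU := hU.mem_nhds (hsub hw)
    rw [fderiv_fun_sub (hf.differentiableAt hwU) ((hg.differentiableAt hwU).fun_const_smul _),
      fderiv_fun_const_smul (hg.differentiableAt hwU), (hball w hw).2.2.1, hc_const w hw, sub_self]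
  exact hU.is_const_of_fderiv_eq_zero hconn hdiff
    (eqOn_zero_of_isPreconnected_of_eventuallyEq_zero hU hconn (differentiableOn_fderiv hU hdiff)
      hz₀ (eventually_of_mem (isOpen_ball.mem_nhds hball₀) hzero)) hz hz₀

end SeveralVariables

section Sphere

variable {ι V : Type*} [Fintype ι] [NormedAddCommGroup V] [NormedSpace ℂ V]

theorem dotProduct_star_eq_zero_comm {z w : ι → ℂ} : z ⬝ᵥ star w = 0 ↔ w ⬝ᵥ star z = 0 := by
  rw [dotProduct_star, star_eq_zero]

theorem dotProduct_self_star_eq_norm_sq (z : ι → ℂ) :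
    z ⬝ᵥ star z = ((‖WithLp.toLp 2 z‖ ^ 2 : ℝ) : ℂ) := by
  rw [← EuclideanSpace.inner_toLp_toLp, inner_self_eq_norm_sq_to_K]
  norm_cast

/-- The complex hyperplane of vectors orthogonal to `z` for the standard Hermitian form. -/
def hermitianPerp [DecidableEq ι] (z : ι → ℂ) : Submodule ℂ (ι → ℂ) :=
  LinearMap.ker (dotProductEquiv ℂ ι (star z))

theorem mem_hermitianPerp [DecidableEq ι] {z u : ι → ℂ} :
    u ∈ hermitianPerp z ↔ u ⬝ᵥ star z = 0 := by
  rw [hermitianPerp, LinearMap.mem_ker, dotProductEquiv_apply_apply, dotProduct_comm]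

theorem finrank_hermitianPerp_add_one [DecidableEq ι] {z : ι → ℂ} (hz : z ≠ 0) :
    Module.finrank ℂ (hermitianPerp z) + 1 = Fintype.card ι := by
  rw [hermitianPerp, Module.Dual.finrank_ker_add_one_of_ne_zero, Module.finrank_fintype_fun_eq_card]
  simpa using hz

theorem exists_orthogonal_norm_eq [Nontrivial ι] (x : ι → ℂ) {δ : ℝ} (hδ : 0 ≤ δ) :
    ∃ e : ι → ℂ, e ⬝ᵥ star x = 0 ∧ ‖WithLp.toLp 2 e‖ = δ := by
  classical
  have hker : hermitianPerp x ≠ ⊥ := by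
    refine LinearMap.ker_ne_bot_of_finrank_lt ?_
    rw [Module.finrank_self, Module.finrank_fintype_fun_eq_card]
    exact Fintype.one_lt_card
  obtain ⟨e, he, he0⟩ := Submodule.exists_mem_ne_zero_of_ne_bot hker
  have hnorm : ‖WithLp.toLp 2 e‖ ≠ 0 := by simpa using he0
  refine ⟨((δ / ‖WithLp.toLp 2 e‖ : ℝ) : ℂ) • e, ?_, ?_⟩
  · rw [smul_dotProduct, mem_hermitianPerp.1 he, smul_zero]
  · rw [WithLp.toLp_smul, norm_smul, Complex.norm_of_nonneg (by positivity),
      div_mul_cancel₀ _ hnorm]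

theorem exists_mem_nhds_norm_toLp_lt_one {z₀ : ι → ℂ} (hnull : ‖WithLp.toLp 2 z₀‖ = 1)
    {W : Set (ι → ℂ)} (hW : W ∈ 𝓝 z₀) : ∃ x ∈ W, ‖WithLp.toLp 2 x‖ < 1 := by
  have hlim : Tendsto (fun c : ℝ => (c : ℂ) • z₀) (𝓝[<] 1) (𝓝 z₀) :=
    ((by fun_prop : Continuous fun c : ℝ => (c : ℂ) • z₀).tendsto' 1 z₀ (by simp)).mono_left
      nhdsWithin_le_nhds
  obtain ⟨c, hcW, hc⟩ :=
    ((hlim.eventually hW).and (Ioo_mem_nhdsLT (zero_lt_one' ℝ))).exists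
  refine ⟨_, hcW, ?_⟩
  rw [WithLp.toLp_smul, norm_smul, hnull, mul_one, Complex.norm_of_nonneg hc.1.le]
  exact hc.2

theorem exists_open_filled_by_discs [Nontrivial ι] {U : Set (ι → ℂ)} (hU : IsOpen U) {z₀ : ι → ℂ}
    (hz₀ : z₀ ∈ U) (hnull : z₀ ⬝ᵥ star z₀ = 1) :
    ∃ W ⊆ U, IsOpen W ∧ W.Nonempty ∧ ∀ x ∈ W, ∃ e ≠ 0, e ⬝ᵥ star x = 0 ∧
      x ⬝ᵥ star x + e ⬝ᵥ star e = 1 ∧ ∀ ω : ℂ, ‖ω‖ ≤ 1 → x + ω • e ∈ U := by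
  let N : (ι → ℂ) → ℝ := fun x => ‖WithLp.toLp 2 x‖
  have hN : Continuous N := (PiLp.continuous_toLp 2 _).norm
  have hN₀ : N z₀ = 1 := by
    rw [dotProduct_self_star_eq_norm_sq] at hnull
    exact (pow_eq_one_iff_of_nonneg (norm_nonneg _) two_ne_zero).1 (by exact_mod_cast hnull)
  obtain ⟨δ, hδ, hball⟩ : ∃ δ > 0, ball z₀ (2 * δ) ⊆ U := by
    obtain ⟨ε, hε, h⟩ := Metric.isOpen_iff.1 hU z₀ hz₀
    exact ⟨ε / 2, half_pos hε, by rwa [mul_div_cancel₀ ε two_ne_zero]⟩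
  have hshell : {x | 1 - δ ^ 2 < N x ^ 2} ∩ ball z₀ δ ∈ 𝓝 z₀ :=
    ((isOpen_lt continuous_const (hN.pow 2)).inter isOpen_ball).mem_nhds
      ⟨by simpa [hN₀] using pow_pos hδ 2, mem_ball_self hδ⟩
  refine ⟨({x | 1 - δ ^ 2 < N x ^ 2} ∩ ball z₀ δ) ∩ {x | N x < 1}, ?_, ?_, ?_, ?_⟩
  · exact fun x hx => hball (ball_subset_ball (by linarith) hx.1.2)
  · exact ((isOpen_lt continuous_const (hN.pow 2)).inter isOpen_ball).inter
      (isOpen_lt hN continuous_const)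
  · obtain ⟨x, hx, hx1⟩ := exists_mem_nhds_norm_toLp_lt_one hN₀ hshell
    exact ⟨x, hx, hx1⟩
  rintro x ⟨⟨hxδ, hxz₀⟩, hx1⟩
  have hpos : 0 < 1 - N x ^ 2 := sub_pos.2 (pow_lt_one₀ (norm_nonneg _) hx1 two_ne_zero)
  obtain ⟨e, hex, he⟩ := exists_orthogonal_norm_eq x (Real.sqrt_nonneg (1 - N x ^ 2))
  have heδ : ‖e‖ < δ := by
    refine lt_of_le_of_lt ?_ ((Real.sqrt_lt' hδ).2 (by linarith [hxδ.out] : 1 - N x ^ 2 < δ ^ 2))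
    rw [← he]
    exact (pi_norm_le_iff_of_nonneg (norm_nonneg _)).2 (PiLp.norm_apply_le (WithLp.toLp 2 e))
  refine ⟨e, ?_, hex, ?_, fun ω hω => hball ?_⟩
  · rintro rfl
    rw [WithLp.toLp_zero, norm_zero] at he
    exact (Real.sqrt_pos.2 hpos).ne he
  · rw [dotProduct_self_star_eq_norm_sq, dotProduct_self_star_eq_norm_sq, he, Real.sq_sqrt hpos.le]
    norm_cast
    exact add_sub_cancel _ _
  · have hωe : ‖ω • e‖ ≤ ‖e‖ :=
      (norm_smul ω e).trans_le (mul_le_of_le_one_left (norm_nonneg e) hω)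
    rw [mem_ball_iff_norm] at hxz₀ ⊢
    rw [add_sub_right_comm]
    linarith [norm_add_le (x - z₀) (ω • e)]

theorem dotProduct_self_star_add_smul {x e : ι → ℂ} (hex : e ⬝ᵥ star x = 0) {ω : ℂ}
    (hω : ‖ω‖ = 1) :
    (x + ω • e) ⬝ᵥ star (x + ω • e) = x ⬝ᵥ star x + e ⬝ᵥ star e := by
  have hωω : ω * star ω = 1 := by simp [Complex.mul_conj, Complex.normSq_eq_norm_sq, hω]
  simp only [star_add, star_smul, add_dotProduct, dotProduct_add, smul_dotProduct, dotProduct_smul,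
    hex, dotProduct_star_eq_zero_comm.1 hex, smul_eq_mul]
  linear_combination (e ⬝ᵥ star e) * hωω

theorem eq_zero_of_eq_zero_on_unit_circle {g : ℂ → V} {O : Set ℂ} (hg : DifferentiableOn ℂ g O)
    (hO : ∀ ω : ℂ, ‖ω‖ ≤ 1 → ω ∈ O) (hzero : ∀ ω : ℂ, ‖ω‖ = 1 → g ω = 0) : g 0 = 0 := by
  have hsub : closedBall (0 : ℂ) 1 ⊆ O := fun ω hω => hO ω (mem_closedBall_zero_iff.1 hω)
  refine Complex.eqOn_of_eqOn_frontier isBounded_ball (hg.diffContOnCl_ball hsub) diffContOnCl_const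
    (fun ω hω => ?_) (mem_ball_self one_pos)
  rw [frontier_ball _ one_ne_zero] at hω
  exact hzero ω (mem_sphere_zero_iff_norm.1 hω)

theorem eqOn_diagonal_of_eq_zero_tangent [Nontrivial ι] [CompleteSpace V] {U : Set (ι → ℂ)}
    (hU : IsOpen U) (hc : IsPreconnected U) (hnull : ∃ z ∈ U, z ⬝ᵥ star z = 1)
    {p : (ι → ℂ) × (ι → ℂ) → V} (hp : DifferentiableOn ℂ p (U ×ˢ univ))
    (htan : ∀ z ∈ U, z ⬝ᵥ star z = 1 → ∀ u, u ⬝ᵥ star z = 0 → p (z, u) = 0) :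
    ∀ z ∈ U, p (z, z) = 0 := by
  obtain ⟨z₀, hz₀, hz₀null⟩ := hnull
  obtain ⟨W, hWU, hWo, ⟨y, hy⟩, hdisc⟩ := exists_open_filled_by_discs hU hz₀ hz₀null
  have hW : ∀ x ∈ W, p (x, x) = 0 := by
    intro x hx
    obtain ⟨e, he, hex, hxe, hmem⟩ := hdisc x hx
    -- With this `κ`, `x - ω κ e` is tangent to the sphere at `x + ω e` whenever `|ω| = 1`.
    set κ : ℂ := (x ⬝ᵥ star x) / (e ⬝ᵥ star e)
    have hκe : κ * (e ⬝ᵥ star e) = x ⬝ᵥ star x :=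
      div_mul_cancel₀ _ (dotProduct_self_star_eq_zero.not.2 he)
    have hdiff : DifferentiableOn ℂ (fun ω : ℂ => p (x + ω • e, x - (ω * κ) • e))
        ((fun ω : ℂ => x + ω • e) ⁻¹' U) :=
      hp.comp (f := fun ω : ℂ => (x + ω • e, x - (ω * κ) • e))
        (by fun_prop : Differentiable ℂ _).differentiableOn fun ω hω => ⟨hω, mem_univ _⟩
    simpa using eq_zero_of_eq_zero_on_unit_circle hdiff hmem fun ω hω => by
      refine htan _ (hmem ω hω.le) ((dotProduct_self_star_add_smul hex hω).trans hxe) _ ?_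
      have hωω : ω * star ω = 1 := by simp [Complex.mul_conj, Complex.normSq_eq_norm_sq, hω]
      simp only [star_add, star_smul, sub_dotProduct, dotProduct_add, smul_dotProduct,
        dotProduct_smul, hex, dotProduct_star_eq_zero_comm.1 hex, smul_eq_mul]
      linear_combination (-κ * (e ⬝ᵥ star e)) * hωω - hκe
  exact eqOn_zero_of_isPreconnected_of_eventuallyEq_zero hU hc
    (hp.comp (f := fun z => (z, z)) (by fun_prop : Differentiable ℂ _).differentiableOn
      fun z hz => ⟨hz, mem_univ _⟩) (hWU hy) (eventually_of_mem (hWo.mem_nhds hy) hW)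

theorem eqOn_zero_of_eq_zero_on_sphere [Nontrivial ι] [CompleteSpace V] {U : Set (ι → ℂ)}
    (hU : IsOpen U) (hc : IsPreconnected U) (hnull : ∃ z ∈ U, z ⬝ᵥ star z = 1) {h : (ι → ℂ) → V}
    (hh : DifferentiableOn ℂ h U) (hzero : ∀ z ∈ U, z ⬝ᵥ star z = 1 → h z = 0) : EqOn h 0 U :=
  eqOn_diagonal_of_eq_zero_tangent hU hc hnull (p := fun q => h q.1)
    (hh.comp differentiableOn_fst fun _ hq => hq.1) fun z hz hzz _ _ => hzero z hz hzz

end Sphere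

section GramMatrices

variable {ι σ ρ κ : Type*} [Fintype ι] [Fintype σ] [Fintype ρ] [Fintype κ]

theorem mul_eq_mul_of_gram_eq {a b : κ → ℂ}
    (h : (a ⬝ᵥ star a) * (b ⬝ᵥ star b) = (a ⬝ᵥ star b) * (b ⬝ᵥ star a)) (k l : κ) :
    a k * b l = a l * b k := by
  rcases eq_or_ne b 0 with rfl | hb
  · simp
  have hab : (b ⬝ᵥ star b) • a - (a ⬝ᵥ star b) • b = 0 := by
    rw [← dotProduct_self_star_eq_zero]
    simp only [star_sub, star_smul, sub_dotProduct, dotProduct_sub, smul_dotProduct,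
      dotProduct_smul, smul_eq_mul]
    linear_combination star (b ⬝ᵥ star b) * h
  have hb' := dotProduct_self_star_eq_zero.not.2 hb
  have happly (k : κ) : (b ⬝ᵥ star b) * a k = (a ⬝ᵥ star b) * b k :=
    sub_eq_zero.1 (congrFun hab k)
  refine mul_left_cancel₀ hb' ?_
  linear_combination b l * happly k - b k * happly l

theorem card_mul_finrank_add_card_le [DecidableEq σ] [DecidableEq ρ] {K : Submodule ℂ (ι → ℂ)}
    {B : σ → K →ₗ[ℂ] (κ → ℂ)} {G : Matrix σ σ ℂ} (hG : G.det ≠ 0)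
    (hB : ∀ s t u v, B s u ⬝ᵥ star (B t v) = ((u : ι → ℂ) ⬝ᵥ star (v : ι → ℂ)) * G s t)
    {f : ρ → κ → ℂ} (hf : ∀ p q, f p ⬝ᵥ star (f q) = (1 : Matrix ρ ρ ℂ) p q)
    (hBf : ∀ s u q, B s u ⬝ᵥ star (f q) = 0) :
    Fintype.card σ * Module.finrank ℂ K + Fintype.card ρ ≤ Fintype.card κ := by
  let T : (σ → K) × (ρ → ℂ) →ₗ[ℂ] (κ → ℂ) :=
    (LinearMap.lsum ℂ (fun _ => K) ℂ B).coprod (Fintype.linearCombination ℂ f)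
  have hdot (x : σ → K) (a : ρ → ℂ) (y : κ → ℂ) :
      T (x, a) ⬝ᵥ y = ∑ s, B s (x s) ⬝ᵥ y + ∑ p, a p * (f p ⬝ᵥ y) := by
    simp [T, Fintype.linearCombination_apply, sum_dotProduct]
  have hinj : Function.Injective T := by
    rw [injective_iff_map_eq_zero]
    rintro ⟨x, a⟩ hxa
    obtain rfl : a = 0 := by
      ext q
      simpa [hxa, hBf, hf, Matrix.one_apply] using (hdot x a (star (f q))).symm
    have hx (v : K) : (fun s => (x s : ι → ℂ) ⬝ᵥ star (v : ι → ℂ)) = 0 := by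
      refine Matrix.eq_zero_of_vecMul_eq_zero hG ?_
      ext t
      change ∑ s, ((x s : ι → ℂ) ⬝ᵥ star (v : ι → ℂ)) * G s t = 0
      simpa only [hxa, hB, zero_dotProduct, Pi.zero_apply, zero_mul, Finset.sum_const_zero,
        add_zero] using (hdot x 0 (star (B t v))).symm
    have hx0 : x = 0 := by
      ext1 s
      exact Subtype.ext (dotProduct_self_star_eq_zero.1 (congrFun (hx (x s)) s))
    rw [hx0, Prod.mk_zero_zero]
  simpa [Module.finrank_pi_fintype] using LinearMap.finrank_le_finrank_of_injective hinj

end GramMatrices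

/-- A local orthogonal map in chart form: `U` is a connected open set of points of the chart of
`𝒢(1, |ι|)` containing a null point, and the rows of `F z` are the rows of a chart point of
`𝒢(|ρ|, |κ|)`. -/
structure IsLocalOrthogonalMap {ι ρ κ : Type*} [Fintype ι] [Fintype ρ] [DecidableEq ρ] [Fintype κ]
    (U : Set (ι → ℂ)) (F : (ι → ℂ) → ρ → κ → ℂ) : Prop where
  isOpen : IsOpen U
  isPreconnected : IsPreconnected U
  exists_null : ∃ z ∈ U, z ⬝ᵥ star z = 1
  differentiableOn : DifferentiableOn ℂ F U
  mul_conjTranspose_eq_one :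
    ∀ z ∈ U, ∀ w ∈ U, z ⬝ᵥ star w = 1 → Matrix.of (F z) * (Matrix.of (F w))ᴴ = 1

/-- The Hermitian products of the derivatives of the rows of `F` in the radial direction at `z`
with the rows of `F z`. At null points this matrix governs the Hermitian products of all tangential
derivatives of `F`. -/
def radialGram {ι ρ κ : Type*} [Fintype ι] [Fintype ρ] [Fintype κ] (F : (ι → ℂ) → ρ → κ → ℂ)
    (z : ι → ℂ) : Matrix ρ ρ ℂ :=
  Matrix.of fun i j => fderiv ℂ F z z i ⬝ᵥ star (F z j)

theorem apply_eq_zero_of_eq_zero_orthogonal {ι V : Type*} [Fintype ι] [AddCommGroup V] [Module ℂ V]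
    {A : (ι → ℂ) →ₗ[ℂ] V} {z : ι → ℂ} (hz : z ⬝ᵥ star z = 1) (hAz : A z = 0)
    (hA : ∀ u, u ⬝ᵥ star z = 0 → A u = 0) (u : ι → ℂ) : A u = 0 := by
  have hu : A (u - (u ⬝ᵥ star z) • z) = 0 :=
    hA _ (by rw [sub_dotProduct, smul_dotProduct, hz, smul_eq_mul, mul_one, sub_self])
  simpa [hAz] using hu

theorem hasDerivAt_row_dotProduct_line {E ρ κ : Type*} [NormedAddCommGroup E] [NormedSpace ℂ E]
    [Finite ρ] [Fintype κ] {F : E → ρ → κ → ℂ} {z : E} (hF : DifferentiableAt ℂ F z) (u : E) (i : ρ)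
    (b : κ → ℂ) :
    HasDerivAt (fun t : ℂ => F (z + t • u) i ⬝ᵥ b) (fderiv ℂ F z u i ⬝ᵥ b) 0 := by
  have := Fintype.ofFinite ρ
  exact HasDerivAt.fun_sum fun k _ =>
    (hasDerivAt_pi.1 (hasDerivAt_pi.1 (hasDerivAt_comp_line hF u) i) k).mul_const (b k)

namespace IsLocalOrthogonalMap

variable {ι ρ κ : Type*} [Fintype ι] [Fintype ρ] [DecidableEq ρ] [Fintype κ]
  {U : Set (ι → ℂ)} {F : (ι → ℂ) → ρ → κ → ℂ} {z w : ι → ℂ}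

theorem differentiableAt (hF : IsLocalOrthogonalMap U F) (hz : z ∈ U) : DifferentiableAt ℂ F z :=
  hF.differentiableOn.differentiableAt (hF.isOpen.mem_nhds hz)

theorem differentiableOn_fderiv_entry (hF : IsLocalOrthogonalMap U F) (i : ρ) (k : κ) :
    DifferentiableOn ℂ (fun q : (ι → ℂ) × (ι → ℂ) => fderiv ℂ F q.1 q.2 i k) (U ×ˢ univ) :=
  differentiableOn_pi.1 (differentiableOn_pi.1
    (differentiableOn_fderiv_uncurry hF.isOpen hF.differentiableOn) i) k

theorem differentiableOn_radial_entry (hF : IsLocalOrthogonalMap U F) (i : ρ) (k : κ) :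
    DifferentiableOn ℂ (fun z => fderiv ℂ F z z i k) U :=
  (hF.differentiableOn_fderiv_entry i k).comp (f := fun z => (z, z)) (by fun_prop)
    fun _ hz => ⟨hz, mem_univ _⟩

theorem row_dotProduct_star_row (hF : IsLocalOrthogonalMap U F) (hz : z ∈ U) (hw : w ∈ U)
    (hzw : z ⬝ᵥ star w = 1) (i j : ρ) : F z i ⬝ᵥ star (F w j) = (1 : Matrix ρ ρ ℂ) i j :=
  congrFun (congrFun (hF.mul_conjTranspose_eq_one z hz w hw hzw) i) j

theorem eventually_line_mem (hF : IsLocalOrthogonalMap U F) (hz : z ∈ U) (u : ι → ℂ) :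
    ∀ᶠ t : ℂ in 𝓝 0, z + t • u ∈ U :=
  ((by fun_prop : Continuous fun t : ℂ => z + t • u).tendsto' 0 z (by simp)).eventually_mem
    (hF.isOpen.mem_nhds hz)

theorem fderiv_dotProduct_star_row (hF : IsLocalOrthogonalMap U F) (hz : z ∈ U) (hw : w ∈ U)
    (hzw : z ⬝ᵥ star w = 1) {u : ι → ℂ} (hu : u ⬝ᵥ star w = 0) (i j : ρ) :
    fderiv ℂ F z u i ⬝ᵥ star (F w j) = 0 := by
  have hconst : (fun t : ℂ => F (z + t • u) i ⬝ᵥ star (F w j)) =ᶠ[𝓝 0]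
      fun _ => (1 : Matrix ρ ρ ℂ) i j := by
    filter_upwards [hF.eventually_line_mem hz u] with t ht
    refine hF.row_dotProduct_star_row ht hw ?_ i j
    rw [add_dotProduct, smul_dotProduct, hu, smul_zero, add_zero, hzw]
  exact (hasDerivAt_row_dotProduct_line (hF.differentiableAt hz) u i _).unique
    ((hasDerivAt_const _ _).congr_of_eventuallyEq hconst)

theorem row_line_dotProduct_star_fderiv (hF : IsLocalOrthogonalMap U F) (hz : z ∈ U)
    (hzz : z ⬝ᵥ star z = 1) {u v : ι → ℂ} (hu : u ⬝ᵥ star z = 0) (hv : v ⬝ᵥ star z = 0) (i j : ρ)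
    {t : ℂ} (ht : z + t • v ∈ U) :
    F (z + t • v) j ⬝ᵥ star (fderiv ℂ F z u i) =
      t * star (u ⬝ᵥ star v) * (F (z + t • v) j ⬝ᵥ star (fderiv ℂ F z z i)) := by
  have hzv := dotProduct_star_eq_zero_comm.1 hv
  have horth : fderiv ℂ F z (u - (star t * (u ⬝ᵥ star v)) • z) i ⬝ᵥ star (F (z + t • v) j) = 0 := by
    refine hF.fderiv_dotProduct_star_row hz ht ?_ ?_ i j
    · rw [star_add, star_smul, dotProduct_add, dotProduct_smul, hzv, smul_zero, add_zero, hzz]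
    · simp only [star_add, star_smul, sub_dotProduct, dotProduct_add, smul_dotProduct,
        dotProduct_smul, hu, hzv, hzz, smul_eq_mul]
      ring
  rw [dotProduct_star_eq_zero_comm] at horth
  simpa [sub_eq_zero] using horth

theorem fderiv_dotProduct_star_fderiv (hF : IsLocalOrthogonalMap U F) (hz : z ∈ U)
    (hzz : z ⬝ᵥ star z = 1) {u v : ι → ℂ} (hu : u ⬝ᵥ star z = 0) (hv : v ⬝ᵥ star z = 0)
    (i j : ρ) :
    fderiv ℂ F z u i ⬝ᵥ star (fderiv ℂ F z v j) = (u ⬝ᵥ star v) * radialGram F z i j := by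
  have hFz := hF.differentiableAt hz
  have hline := (((hasDerivAt_id (0 : ℂ)).mul_const (star (u ⬝ᵥ star v))).mul
    (hasDerivAt_row_dotProduct_line hFz v j (star (fderiv ℂ F z z i)))).congr_of_eventuallyEq
    ((hF.eventually_line_mem hz v).mono fun t ht =>
      hF.row_line_dotProduct_star_fderiv hz hzz hu hv i j ht)
  have hderiv : fderiv ℂ F z v j ⬝ᵥ star (fderiv ℂ F z u i) =
      star (u ⬝ᵥ star v) * (F z j ⬝ᵥ star (fderiv ℂ F z z i)) := by
    simpa using (hasDerivAt_row_dotProduct_line hFz v j _).unique hline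
  rw [dotProduct_star, hderiv, star_mul', star_star, ← dotProduct_star]
  rfl

theorem det_radialGram_submatrix_eq_zero (hF : IsLocalOrthogonalMap U F) (hz : z ∈ U)
    (hzz : z ⬝ᵥ star z = 1) (hcodim : Fintype.card κ + 2 < Fintype.card ρ + 2 * Fintype.card ι)
    (s : Fin 2 → ρ) : ((radialGram F z).submatrix s s).det = 0 := by
  classical
  by_contra hdet
  have hz0 : z ≠ 0 := by
    rintro rfl
    simp at hzz
  let B : Fin 2 → hermitianPerp z →ₗ[ℂ] (κ → ℂ) := fun a =>
    LinearMap.proj (s a) ∘ₗ (fderiv ℂ F z).toLinearMap ∘ₗ (hermitianPerp z).subtype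
  have hcard := card_mul_finrank_add_card_le (B := B) hdet
    (fun a b u v => hF.fderiv_dotProduct_star_fderiv hz hzz (mem_hermitianPerp.1 u.2)
      (mem_hermitianPerp.1 v.2) (s a) (s b))
    (hF.row_dotProduct_star_row hz hz hzz)
    (fun a u q => hF.fderiv_dotProduct_star_row hz hz hzz (mem_hermitianPerp.1 u.2) (s a) q)
  have hperp := finrank_hermitianPerp_add_one hz0
  rw [Fintype.card_fin] at hcard
  omega

theorem tangent_minor_eq_zero (hF : IsLocalOrthogonalMap U F) (hz : z ∈ U)
    (hzz : z ⬝ᵥ star z = 1) (hcodim : Fintype.card κ + 2 < Fintype.card ρ + 2 * Fintype.card ι)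
    {u : ι → ℂ} (hu : u ⬝ᵥ star z = 0) (i j : ρ) (k l : κ) :
    fderiv ℂ F z u i k * fderiv ℂ F z u j l = fderiv ℂ F z u i l * fderiv ℂ F z u j k := by
  have hdet := hF.det_radialGram_submatrix_eq_zero hz hzz hcodim ![i, j]
  rw [det_fin_two] at hdet
  simp only [submatrix_apply, cons_val_zero, cons_val_one] at hdet
  refine mul_eq_mul_of_gram_eq ?_ k l
  simp only [hF.fderiv_dotProduct_star_fderiv hz hzz hu hu]
  linear_combination (u ⬝ᵥ star u) ^ 2 * hdet

theorem linearIndependent_tangent_radial (hF : IsLocalOrthogonalMap U F) (hz : z ∈ U)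
    (hzz : z ⬝ᵥ star z = 1) {j : ρ} (hj : radialGram F z j j ≠ 0) {e : ι → ℂ} (he : e ≠ 0)
    (hez : e ⬝ᵥ star z = 0) : LinearIndependent ℂ ![fderiv ℂ F z e j, fderiv ℂ F z z j] := by
  have htan : fderiv ℂ F z e j ≠ 0 := by
    rw [← dotProduct_self_star_eq_zero.ne, hF.fderiv_dotProduct_star_fderiv hz hzz hez hez]
    exact mul_ne_zero (dotProduct_self_star_eq_zero.not.2 he) hj
  rw [LinearIndependent.pair_iff]
  intro a b hab
  have hb : b * radialGram F z j j = 0 := by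
    simpa [radialGram, add_dotProduct, hF.fderiv_dotProduct_star_row hz hz hzz hez] using
      congrArg (· ⬝ᵥ star (F z j)) hab
  obtain rfl := (mul_eq_zero.1 hb).resolve_right hj
  rw [zero_smul, add_zero] at hab
  exact ⟨(smul_eq_zero.1 hab).resolve_right htan, rfl⟩

variable [Nontrivial ι]

theorem radial_minor_eq_zero (hF : IsLocalOrthogonalMap U F)
    (hcodim : Fintype.card κ + 2 < Fintype.card ρ + 2 * Fintype.card ι) (hz : z ∈ U) (i j : ρ)
    (k l : κ) :
    fderiv ℂ F z z i k * fderiv ℂ F z z j l = fderiv ℂ F z z i l * fderiv ℂ F z z j k := by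
  have hdiff := hF.differentiableOn_fderiv_entry
  exact sub_eq_zero.1 <| eqOn_diagonal_of_eq_zero_tangent hF.isOpen hF.isPreconnected
    hF.exists_null (((hdiff i k).mul (hdiff j l)).sub ((hdiff i l).mul (hdiff j k)))
    (fun z hz hzz u hu => sub_eq_zero.2 (hF.tangent_minor_eq_zero hz hzz hcodim hu i j k l)) z hz

theorem fderiv_rows_proportional_of_null (hF : IsLocalOrthogonalMap U F)
    (hcodim : Fintype.card κ + 2 < Fintype.card ρ + 2 * Fintype.card ι) (hz : z ∈ U)
    (hzz : z ⬝ᵥ star z = 1) (i j : ρ) (l : κ) (u : ι → ℂ) :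
    fderiv ℂ F z z j l • fderiv ℂ F z u i - fderiv ℂ F z z i l • fderiv ℂ F z u j = 0 := by
  let A : (ι → ℂ) →ₗ[ℂ] (κ → ℂ) :=
    (fderiv ℂ F z z j l • LinearMap.proj i - fderiv ℂ F z z i l • LinearMap.proj j) ∘ₗ
      (fderiv ℂ F z).toLinearMap
  have hA (u : ι → ℂ) :
      A u = fderiv ℂ F z z j l • fderiv ℂ F z u i - fderiv ℂ F z z i l • fderiv ℂ F z u j := rfl
  have hAz : A z = 0 := by
    ext k
    change fderiv ℂ F z z j l * fderiv ℂ F z z i k - fderiv ℂ F z z i l * fderiv ℂ F z z j k = 0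
    linear_combination hF.radial_minor_eq_zero hcodim hz i j k l
  have hgram (q : ρ) : fderiv ℂ F z z j l * radialGram F z i q =
      fderiv ℂ F z z i l * radialGram F z j q := by
    simpa [A, radialGram, sub_dotProduct, sub_eq_zero] using congrArg (· ⬝ᵥ star (F z q)) hAz
  refine apply_eq_zero_of_eq_zero_orthogonal (A := A) hzz hAz (fun e he => ?_) u
  have hperp (q : ρ) : A e ⬝ᵥ star (fderiv ℂ F z e q) = 0 := by
    simp only [hA, sub_dotProduct, smul_dotProduct, smul_eq_mul,
      hF.fderiv_dotProduct_star_fderiv hz hzz he he]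
    linear_combination (e ⬝ᵥ star e) * hgram q
  rw [← dotProduct_self_star_eq_zero]
  nth_rw 2 [hA]
  rw [star_sub, star_smul, star_smul, dotProduct_sub, dotProduct_smul, dotProduct_smul, hperp,
    hperp, smul_zero, smul_zero, sub_zero]

theorem fderiv_rows_proportional (hF : IsLocalOrthogonalMap U F)
    (hcodim : Fintype.card κ + 2 < Fintype.card ρ + 2 * Fintype.card ι) (hz : z ∈ U)
    (i j : ρ) (l : κ) (u : ι → ℂ) :
    fderiv ℂ F z z j l • fderiv ℂ F z u i = fderiv ℂ F z z i l • fderiv ℂ F z u j := by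
  have hrad := hF.differentiableOn_radial_entry
  have hrow (i : ρ) : DifferentiableOn ℂ (fun z => fderiv ℂ F z u i) U :=
    differentiableOn_pi.1 (differentiableOn_fderiv_apply hF.isOpen hF.differentiableOn u) i
  exact sub_eq_zero.1 <| eqOn_zero_of_eq_zero_on_sphere hF.isOpen hF.isPreconnected hF.exists_null
    (((hrad j l).smul (hrow i)).sub ((hrad i l).smul (hrow j)))
    (fun z hz hzz => hF.fderiv_rows_proportional_of_null hcodim hz hzz i j l u) hz

theorem exists_null_radialGram_ne_zero (hF : IsLocalOrthogonalMap U F)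
    (hnonnull : ∃ z ∈ U, Matrix.of (F z) * (Matrix.of (F z))ᴴ ≠ 1) :
    ∃ z ∈ U, z ⬝ᵥ star z = 1 ∧ ∃ j, radialGram F z j j ≠ 0 := by
  by_contra! hgram
  have htan : ∀ z ∈ U, z ⬝ᵥ star z = 1 → ∀ u, u ⬝ᵥ star z = 0 → fderiv ℂ F z u = 0 := by
    intro z hz hzz u hu
    ext1 i
    refine dotProduct_self_star_eq_zero.1 ?_
    rw [hF.fderiv_dotProduct_star_fderiv hz hzz hu hu, hgram z hz hzz, mul_zero]
  have hrad : ∀ z ∈ U, fderiv ℂ F z z = 0 :=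
    eqOn_diagonal_of_eq_zero_tangent hF.isOpen hF.isPreconnected hF.exists_null
      (differentiableOn_fderiv_uncurry hF.isOpen hF.differentiableOn) htan
  have hfderiv : EqOn (fderiv ℂ F) 0 U :=
    eqOn_zero_of_eq_zero_on_sphere hF.isOpen hF.isPreconnected hF.exists_null
      (differentiableOn_fderiv hF.isOpen hF.differentiableOn) fun z hz hzz =>
        ContinuousLinearMap.ext <| apply_eq_zero_of_eq_zero_orthogonal
          (A := (fderiv ℂ F z).toLinearMap) hzz (hrad z hz) (htan z hz hzz)
  obtain ⟨z₁, hz₁, hne⟩ := hnonnull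
  obtain ⟨z₀, hz₀, hz₀null⟩ := hF.exists_null
  refine hne ?_
  rw [hF.isOpen.is_const_of_fderiv_eq_zero hF.isPreconnected hF.differentiableOn hfderiv hz₁ hz₀]
  exact hF.mul_conjTranspose_eq_one z₀ hz₀ z₀ hz₀ hz₀null

theorem exists_rows_sub_smul_eq (hF : IsLocalOrthogonalMap U F)
    (hcodim : Fintype.card κ + 2 < Fintype.card ρ + 2 * Fintype.card ι) (hz : z ∈ U)
    (hzz : z ⬝ᵥ star z = 1) {j : ρ} (hj : radialGram F z j j ≠ 0) :
    ∃ c : ρ → ℂ, c j = 1 ∧ ∀ w ∈ U, ∀ i, F w i - c i • F w j = F z i - c i • F z j := by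
  obtain ⟨l, hl⟩ : ∃ l, fderiv ℂ F z z j l ≠ 0 := by
    by_contra! hzero
    exact hj (by simp [radialGram, show fderiv ℂ F z z j = 0 from funext hzero])
  obtain ⟨e, hez, he⟩ := exists_orthogonal_norm_eq z zero_le_one
  have he0 : e ≠ 0 := by
    rintro rfl
    simp at he
  have hrad := hF.differentiableOn_radial_entry
  have hrow := differentiableOn_pi.1 hF.differentiableOn
  have hfderiv (i : ρ) {w : ι → ℂ} (hw : w ∈ U) (u : ι → ℂ) :
      fderiv ℂ (fun w => F w i) w u = fderiv ℂ F w u i := by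
    rw [fderiv_apply (hF.differentiableAt hw)]
    rfl
  have hne : ∀ᶠ w in 𝓝 z, w ∈ U ∧ fderiv ℂ F w w j l ≠ 0 :=
    (hF.isOpen.eventually_mem hz).and (((hrad j l).differentiableAt
      (hF.isOpen.mem_nhds hz)).continuousAt.eventually_ne hl)
  refine ⟨fun i => fderiv ℂ F z z i l / fderiv ℂ F z z j l, div_self hl, fun w hw i => ?_⟩
  refine sub_smul_eq_of_fderiv_eq_smul (c := fun w => fderiv ℂ F w w i l / fderiv ℂ F w w j l)
    hF.isOpen hF.isPreconnected (hrow i) (hrow j) hz ?_ ?_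
    (by simpa only [hfderiv j hz] using hF.linearIndependent_tangent_radial hz hzz hj he0 hez) hw
  · filter_upwards [hne] with y hy
    have hyU := hF.isOpen.mem_nhds hy.1
    simpa only [div_eq_mul_inv] using
      ((hrad i l).differentiableAt hyU).fun_mul (((hrad j l).differentiableAt hyU).fun_inv hy.2)
  · filter_upwards [hne] with y hy
    ext1 u
    rw [_root_.smul_apply, hfderiv i hy.1, hfderiv j hy.1, div_eq_inv_mul, mul_smul,
      ← hF.fderiv_rows_proportional hcodim hy.1, inv_smul_smul₀ hy.2]

theorem exists_eq_add_vecMulVec (hF : IsLocalOrthogonalMap U F)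
    (hcodim : Fintype.card κ + 2 < Fintype.card ρ + 2 * Fintype.card ι)
    (hnonnull : ∃ z ∈ U, Matrix.of (F z) * (Matrix.of (F z))ᴴ ≠ 1) :
    ∃ z ∈ U, z ⬝ᵥ star z = 1 ∧ ∃ c : ρ → ℂ, c ≠ 0 ∧
      ∀ w ∈ U, ∃ x, Matrix.of (F w) = Matrix.of (F z) + vecMulVec c x := by
  obtain ⟨z, hz, hzz, j, hj⟩ := hF.exists_null_radialGram_ne_zero hnonnull
  obtain ⟨c, hcj, hc⟩ := hF.exists_rows_sub_smul_eq hcodim hz hzz hj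
  refine ⟨z, hz, hzz, c, fun hc0 => ?_, fun w hw => ⟨F w j - F z j, ?_⟩⟩
  · simp [hc0] at hcj
  · ext i k
    have hik := congrFun (hc w hw i) k
    simp only [Pi.sub_apply, Pi.smul_apply, smul_eq_mul] at hik
    simp only [of_apply, Matrix.add_apply, vecMulVec_apply, Pi.sub_apply]
    linear_combination hik

end IsLocalOrthogonalMap

section ChartMatrices

variable {r m : ℕ} {Z : Matrix (Fin r) (Fin m) ℂ}

theorem iip_append (u v : Fin r → ℂ) (x y : Fin m → ℂ) :
    iip r m (Fin.append u x) (Fin.append v y) = u ⬝ᵥ star v - x ⬝ᵥ star y := by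
  simp [iip, Fin.sum_univ_add, dotProduct, sub_eq_add_neg]

theorem vecMul_chartMat (v : Fin r → ℂ) : v ᵥ* chartMat r m Z = Fin.append v (v ᵥ* Z) := by
  ext q
  refine Fin.addCases (fun i => ?_) (fun k => ?_) q <;>
    simp [vecMul, dotProduct, chartMat, ← Fin.ext_iff]

theorem vecMul_chartMat_add_vecMulVec {v c : Fin r → ℂ} (hv : v ⬝ᵥ c = 0) (x : Fin m → ℂ) :
    v ᵥ* chartMat r m (Z + vecMulVec c x) = v ᵥ* chartMat r m Z := by
  rw [vecMul_chartMat, vecMul_chartMat, vecMul_add, vecMul_vecMulVec, hv, zero_smul, add_zero]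

theorem vecMulLinear_chartMat_injective : Function.Injective (chartMat r m Z).vecMulLinear := by
  intro v w hvw
  rw [vecMulLinear_apply, vecMulLinear_apply, vecMul_chartMat, vecMul_chartMat] at hvw
  ext i
  simpa using congrFun hvw (Fin.castAdd m i)

theorem iip_vecMul_chartMat (hZ : Z * Zᴴ = 1) (v w : Fin r → ℂ) :
    iip r m (v ᵥ* chartMat r m Z) (w ᵥ* chartMat r m Z) = 0 := by
  rw [vecMul_chartMat, vecMul_chartMat, iip_append, star_vecMul, dotProduct_mulVec, vecMul_vecMul,
    hZ, vecMul_one, sub_self]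

theorem exists_isotropic_le_rowSpan (hZ : Z * Zᴴ = 1) {c : Fin r → ℂ} (hc : c ≠ 0) :
    ∃ N : Submodule ℂ (Fin (r + m) → ℂ), Module.finrank ℂ N = r - 1 ∧
      (∀ u ∈ N, ∀ v ∈ N, iip r m u v = 0) ∧
      ∀ x, N ≤ rowSpan (chartMat r m (Z + vecMulVec c x)) := by
  refine ⟨(hermitianPerp (star c)).map (chartMat r m Z).vecMulLinear, ?_, ?_, ?_⟩
  · have hperp := finrank_hermitianPerp_add_one (star_ne_zero.2 hc)
    rw [Fintype.card_fin] at hperp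
    rw [← (Submodule.equivMapOfInjective _ vecMulLinear_chartMat_injective _).finrank_eq]
    omega
  · rintro _ ⟨v, -, rfl⟩ _ ⟨w, -, rfl⟩
    exact iip_vecMul_chartMat hZ v w
  · rintro x _ ⟨v, hv, rfl⟩
    have hvc : v ⬝ᵥ c = 0 := by simpa using mem_hermitianPerp.1 hv
    rw [vecMulLinear_apply, ← vecMul_chartMat_add_vecMulVec hvc x]
    exact (range_vecMulLinear _).le ⟨v, rfl⟩

end ChartMatrices

/-- Let `s ≥ 2`, `2 ≤ r' ≤ s'` with `s' − r' < 2(s − 1)`, and let `F` be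
a non-null local orthogonal map in chart form from `𝒢(1,s)` to `𝒢(r',s')`.  Then there
exists an `(r'−1)`-dimensional ℂ-linear subspace `N ⊆ ℂ^{r'+s'}`, totally isotropic for
`⟨·,·⟩_{r',s'}`, with `N ⊆ rowSpan([I_{r'} | F(z)])` for every `z ∈ U`. -/
theorem common_null_subspace_of_nonnull_orthogonal_map
    (s r' s' : ℕ) (hs : 2 ≤ s) (hr' : 2 ≤ r') (hr's' : r' ≤ s')
    (hcodim : (s' : ℤ) - (r' : ℤ) < 2 * ((s : ℤ) - 1))
    (U : Set (Fin s → ℂ)) (hopen : IsOpen U) (hconn : IsPreconnected U)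
    (hnull : ∃ z ∈ U, cdot z z = 1)
    (F : (Fin s → ℂ) → Fin r' → Fin s' → ℂ)
    (hF : DifferentiableOn ℂ F U)
    (horth : ∀ z ∈ U, ∀ w ∈ U, cdot z w = 1 →
      Matrix.of (F z) * (Matrix.of (F w))ᴴ = (1 : Matrix (Fin r') (Fin r') ℂ))
    (hnonnull : ∃ z₁ ∈ U,
      Matrix.of (F z₁) * (Matrix.of (F z₁))ᴴ ≠ (1 : Matrix (Fin r') (Fin r') ℂ)) :
    ∃ N : Submodule ℂ (Fin (r' + s') → ℂ),
      Module.finrank ℂ ↥N = r' - 1 ∧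
      (∀ u ∈ N, ∀ v ∈ N, iip r' s' u v = 0) ∧
      ∀ z ∈ U, N ≤ rowSpan (chartMat r' s' (Matrix.of (F z))) := by
  have hmap : IsLocalOrthogonalMap U F := ⟨hopen, hconn, hnull, hF, horth⟩
  have : Nontrivial (Fin s) := Fin.nontrivial_iff_two_le.2 hs
  have hcard : Fintype.card (Fin s') + 2 < Fintype.card (Fin r') + 2 * Fintype.card (Fin s) := by
    simp only [Fintype.card_fin]
    omega
  obtain ⟨z₀, hz₀, hz₀null, c, hc, hF_eq⟩ := hmap.exists_eq_add_vecMulVec hcard hnonnull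
  obtain ⟨N, hN_rank, hN_isotropic, hN_le⟩ :=
    exists_isotropic_le_rowSpan (hmap.mul_conjTranspose_eq_one z₀ hz₀ z₀ hz₀ hz₀null) hc
  refine ⟨N, hN_rank, hN_isotropic, fun z hz => ?_⟩
  obtain ⟨x, hx⟩ := hF_eq z hz
  rw [hx]
  exact hN_le x
end
end

section
/- Let s ≥ 2 and r' ≥ 2 be integers. Define the generalized Whitney map f : ℂ^s → ℂ^{r'×(r'+2s−2)} as follows: the first row of f(z) is (z₁, …, z_{s−1}, z₁z_s, z₂z_s, …, z_s², 0, …, 0), i.e. its first s−1 entries are z₁,…,z_{s−1}, its next s entries are z₁z_s,…,z_sz_s, and its last r'−1 entries are 0; for 2 ≤ i ≤ r', the i-th row of f(z) has a 1 in column (2s−1)+(i−1) and 0 in all other columns. Then f maps the unit sphere into the Shilov boundary S(Ω_{r', r'+2s−2}): whenever ∑_{i=1}^s |z_i|² = 1, one has f(z)·f(z)ᴴ = I_{r'}. (Here s' − r' = 2s − 2, showing the bound s' − r' < 2s − 2 in the rigidity theorem is sharp.) -/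
open scoped BigOperators
open Matrix

noncomputable section

/-- The generalized Whitney map `f : ℂ^s → ℂ^{r'×(r'+2s−2)}`: the first row of `f(z)` is
`(z₁, …, z_{s−1}, z₁z_s, z₂z_s, …, z_s², 0, …, 0)` (first `s−1` entries `z₁,…,z_{s−1}`,
next `s` entries `z₁z_s,…,z_sz_s`, last `r'−1` entries `0`), and for `2 ≤ i ≤ r'` the
`i`-th row has a `1` in column `(2s−1)+(i−1)` and `0` elsewhere. -/
def whitney (s r' : ℕ) (hs : 1 ≤ s) (z : Fin s → ℂ) :
    Matrix (Fin r') (Fin (r' + (2 * s - 2))) ℂ :=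
  Matrix.of fun i j =>
    if (i : ℕ) = 0 then
      if h1 : (j : ℕ) < s - 1 then z ⟨(j : ℕ), by omega⟩
      else if h2 : (j : ℕ) < 2 * s - 1 then
        z ⟨(j : ℕ) - (s - 1), by omega⟩ * z ⟨s - 1, by omega⟩
      else 0
    else if (j : ℕ) = 2 * s - 2 + (i : ℕ) then 1 else 0

/-!
Up to a permutation of columns, `f(z)` is the block matrix `W(z) ⊕ I`, where `W(z)` is the classical
Whitney map, so `f(z)` has orthonormal rows iff `W(z)` is a unit vector. For the latter,
`|W(z)|² = |z|² - |z_s|² + |z_s|²|z|²`, that is, `|W(z)|² - 1 = (|z|² - 1)(1 + |z_s|²)`, and the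
second factor is positive.
-/

section BlockGram

variable {R m n p q : Type*} [Fintype n] [DecidableEq m]

theorem submatrix_mul_conjTranspose_eq_one_iff [NonAssocSemiring R] [StarRing R] [Fintype p]
    [DecidableEq q] (A : Matrix m n R) (e : q ≃ m) (f : p ≃ n) :
    A.submatrix e f * (A.submatrix e f)ᴴ = 1 ↔ A * Aᴴ = 1 := by
  rw [conjTranspose_submatrix, submatrix_mul_equiv, ← submatrix_one_equiv e]
  exact (reindex e.symm e.symm).injective.eq_iff (a := A * Aᴴ) (b := 1)

theorem fromBlocks_one_mul_conjTranspose_eq_one_iff [NonAssocSemiring R] [StarRing R] [Fintype p]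
    [DecidableEq p] (A : Matrix m n R) :
    fromBlocks A 0 0 (1 : Matrix p p R) * (fromBlocks A 0 0 (1 : Matrix p p R))ᴴ = 1 ↔
      A * Aᴴ = 1 := by
  simp [fromBlocks_conjTranspose, fromBlocks_multiply, ← fromBlocks_one, fromBlocks_inj]

theorem replicateRow_mul_conjTranspose_eq_one_iff [NonAssocSemiring R] [StarRing R] [Unique m]
    (v : n → R) : replicateRow m v * (replicateRow m v)ᴴ = 1 ↔ v ⬝ᵥ star v = 1 := by
  rw [conjTranspose_replicateRow, replicateRow_mul_replicateCol, ← Matrix.ext_iff]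
  simp

end BlockGram

/-- The classical Whitney map `z ↦ (z₁, …, z_{s-1}, z₁z_s, …, z_sz_s)` with `s = n + 1`. The two
groups of entries are indexed by the two summands of `Fin n ⊕ Fin (n + 1)`. -/
def whitneyVec {R : Type*} [Mul R] {n : ℕ} (z : Fin (n + 1) → R) : Fin n ⊕ Fin (n + 1) → R :=
  Sum.elim (Fin.init z) fun i => z i * z (Fin.last n)

theorem whitneyVec_dotProduct_star_sub_one {R : Type*} [CommRing R] [StarRing R] {n : ℕ}
    (z : Fin (n + 1) → R) :
    whitneyVec z ⬝ᵥ star (whitneyVec z) - 1 =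
      (z ⬝ᵥ star z - 1) * (1 + z (Fin.last n) * star (z (Fin.last n))) := by
  set c := z (Fin.last n) * star (z (Fin.last n)) with hc
  have head_sum : ∑ i, Fin.init z i * star (Fin.init z i) = z ⬝ᵥ star z - c :=
    eq_sub_of_add_eq (Fin.sum_univ_castSucc fun i => z i * star (z i)).symm
  have tail_sum : ∑ i, z i * z (Fin.last n) * star (z i * z (Fin.last n)) = (z ⬝ᵥ star z) * c := by
    rw [dotProduct, Finset.sum_mul]
    refine Finset.sum_congr rfl fun i _ => ?_
    rw [star_mul', hc, Pi.star_apply, mul_mul_mul_comm]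
  calc whitneyVec z ⬝ᵥ star (whitneyVec z) - 1
      = (z ⬝ᵥ star z - c) + (z ⬝ᵥ star z) * c - 1 := by
        rw [← head_sum, ← tail_sum, dotProduct, Fintype.sum_sum_type]
        rfl
    _ = (z ⬝ᵥ star z - 1) * (1 + c) := by ring

open scoped ComplexOrder in
theorem whitneyVec_dotProduct_star_eq_one_iff {𝕜 : Type*} [RCLike 𝕜] {n : ℕ}
    (z : Fin (n + 1) → 𝕜) : whitneyVec z ⬝ᵥ star (whitneyVec z) = 1 ↔ z ⬝ᵥ star z = 1 := by
  have one_add_ne_zero : 1 + z (Fin.last n) * star (z (Fin.last n)) ≠ 0 :=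
    (add_pos_of_pos_of_nonneg one_pos (mul_star_self_nonneg _)).ne'
  rw [← sub_eq_zero, whitneyVec_dotProduct_star_sub_one, mul_eq_zero_iff_right one_add_ne_zero,
    sub_eq_zero]

theorem dotProduct_star_self_eq_sum_normSq {ι : Type*} [Fintype ι] (z : ι → ℂ) :
    z ⬝ᵥ star z = ((∑ i, Complex.normSq (z i) : ℝ) : ℂ) := by
  rw [Complex.ofReal_sum]
  exact Finset.sum_congr rfl fun i _ => Complex.mul_conj (z i)

/-- The columns of `whitney (n + 1) (1 + k)`, split into the linear entries, the quadratic entries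
and the identity block. -/
def whitneyColEquiv (n k : ℕ) :
    (Fin n ⊕ Fin (n + 1)) ⊕ Fin k ≃ Fin (1 + k + (2 * (n + 1) - 2)) :=
  ((finSumFinEquiv.sumCongr (Equiv.refl _)).trans finSumFinEquiv).trans (finCongr (by omega))

section ColumnValues

variable {n k : ℕ}

theorem whitneyColEquiv_linear_val (j : Fin n) :
    (whitneyColEquiv n k (Sum.inl (Sum.inl j)) : ℕ) = j := rfl

theorem whitneyColEquiv_quadratic_val (j : Fin (n + 1)) :
    (whitneyColEquiv n k (Sum.inl (Sum.inr j)) : ℕ) = n + j := rfl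

theorem whitneyColEquiv_identity_val (j : Fin k) :
    (whitneyColEquiv n k (Sum.inr j) : ℕ) = 2 * n + 1 + j := by
  have offset : (whitneyColEquiv n k (Sum.inr j) : ℕ) = n + (n + 1) + j := rfl
  omega

end ColumnValues

section Entries

variable {s r' : ℕ} (hs : 1 ≤ s) (z : Fin s → ℂ) {i : Fin r'} {j : Fin (r' + (2 * s - 2))}

theorem whitney_apply_linear (hi : (i : ℕ) = 0) {l : Fin s} (hl : (l : ℕ) < s - 1)
    (hj : (j : ℕ) = l) : whitney s r' hs z i j = z l := by
  simp [whitney, hi, hj, hl]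

theorem whitney_apply_quadratic (hi : (i : ℕ) = 0) (l : Fin s) (hj : (j : ℕ) = s - 1 + l) :
    whitney s r' hs z i j = z l * z ⟨s - 1, by omega⟩ := by
  have hlt : s - 1 + (l : ℕ) < 2 * s - 1 := by omega
  simp [whitney, hi, hj, hlt]

theorem whitney_apply_eq_zero (hi : (i : ℕ) = 0) (hj : 2 * s - 1 ≤ (j : ℕ)) :
    whitney s r' hs z i j = 0 := by
  have hj' : s - 1 ≤ (j : ℕ) := by omega
  simp [whitney, hi, hj.not_gt, hj'.not_gt]

theorem whitney_apply_of_row_ne_zero (hi : (i : ℕ) ≠ 0) :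
    whitney s r' hs z i j = if (j : ℕ) = 2 * s - 2 + i then 1 else 0 := by
  simp only [whitney, of_apply, if_neg hi]

end Entries

theorem whitney_submatrix_eq_fromBlocks {n k : ℕ} (z : Fin (n + 1) → ℂ) :
    (whitney (n + 1) (1 + k) n.succ_pos z).submatrix finSumFinEquiv (whitneyColEquiv n k) =
      fromBlocks (replicateRow (Fin 1) (whitneyVec z)) 0 0 1 := by
  have bottom_row (i : Fin k) (c) : whitney (n + 1) (1 + k) n.succ_pos z
      (finSumFinEquiv (Sum.inr i)) c = if (c : ℕ) = 2 * n + 1 + i then 1 else 0 := by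
    rw [whitney_apply_of_row_ne_zero _ z (by simp), finSumFinEquiv_apply_right, Fin.val_natAdd,
      show 2 * (n + 1) - 2 + (1 + (i : ℕ)) = 2 * n + 1 + i by omega]
  ext (i | i) ((j | j) | j) <;> rw [submatrix_apply]
  · exact whitney_apply_linear _ z (by simp) (l := j.castSucc) (by simp) rfl
  · exact whitney_apply_quadratic _ z (by simp) j rfl
  · exact whitney_apply_eq_zero _ z (by simp) (by rw [whitneyColEquiv_identity_val]; omega)
  · rw [bottom_row, whitneyColEquiv_linear_val]
    exact if_neg (by omega)
  · rw [bottom_row, whitneyColEquiv_quadratic_val]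
    exact if_neg (by omega)
  · rw [bottom_row, whitneyColEquiv_identity_val]
    simp [one_apply, Fin.ext_iff, eq_comm]

theorem whitney_maps_sphere_to_shilov_general
    (s r' : ℕ) (hs : 1 ≤ s) (hr' : 1 ≤ r') (z : Fin s → ℂ) :
    whitney s r' hs z * (whitney s r' hs z)ᴴ = 1 ↔ ∑ i, Complex.normSq (z i) = 1 := by
  obtain ⟨n, rfl⟩ := Nat.exists_eq_add_of_le' hs
  obtain ⟨k, rfl⟩ := Nat.exists_eq_add_of_le hr'
  rw [← submatrix_mul_conjTranspose_eq_one_iff _ finSumFinEquiv (whitneyColEquiv n k),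
    whitney_submatrix_eq_fromBlocks, fromBlocks_one_mul_conjTranspose_eq_one_iff,
    replicateRow_mul_conjTranspose_eq_one_iff, whitneyVec_dotProduct_star_eq_one_iff,
    dotProduct_star_self_eq_sum_normSq, Complex.ofReal_eq_one]

/-- Let `s ≥ 2` and `r' ≥ 2`.  The generalized Whitney map sends the
unit sphere `{z : ∑ |z_i|² = 1}` into the Shilov boundary `S(Ω_{r',r'+2s−2})`:
`f(z)·f(z)ᴴ = I_{r'}`.  (Here `s' − r' = 2s − 2`, showing the bound `s' − r' < 2s − 2`
in the rigidity theorem is sharp.) -/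
theorem whitney_maps_sphere_to_shilov
    (s r' : ℕ) (hs : 2 ≤ s) (hr' : 2 ≤ r')
    (z : Fin s → ℂ) (hz : ∑ i, Complex.normSq (z i) = 1) :
    whitney s r' (by omega) z * (whitney s r' (by omega) z)ᴴ =
      (1 : Matrix (Fin r') (Fin r') ℂ) :=
  (whitney_maps_sphere_to_shilov_general s r' (by omega) (by omega) z).mpr hz
end
end

section
/- Let E be a finite-dimensional vector space over ℂ, let m ≥ 1 and d, k ≥ 0 be integers, and let V₁, …, V_m be subspaces of E with dim V_i = d for every i, such that dim(V_i ∩ ∑_{j≠i} V_j) ≤ k for every i. Then dim(∑_{i=1}^m V_i) ≥ m(d − k) + k. -/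
open scoped BigOperators

noncomputable section

/-!
Adjoin the subspaces one at a time, starting from any one of them. By Grassmann's formula each
further `V i` adds `dim V i` minus the dimension of its intersection with the sum of the earlier
ones, hence at least `dim V i - dim (V i ∩ ∑_{j ≠ i} V j)`. The starting subspace loses nothing,
which is why only `m - 1` intersections count and the term `+ k` survives.
-/

section Overlap

open Module (finrank)

variable {K E ι : Type*} [DivisionRing K] [AddCommGroup E] [Module K E]

theorem finrank_add_finrank_le_finrank_sup_add_finrank_inf {U W X : Submodule K E}
    [FiniteDimensional K U] [FiniteDimensional K W] (hWX : W ≤ X) :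
    finrank K U + finrank K W ≤ finrank K ↥(U ⊔ W) + finrank K ↥(U ⊓ X) := by
  rw [← Submodule.finrank_sup_add_finrank_inf_eq U W]
  gcongr
  exact Submodule.finrank_mono (inf_le_inf_left U hWX)

theorem finrank_add_sum_finrank_le_finrank_sup_add_sum_finrank_inf
    (V : ι → Submodule K E) [∀ i, FiniteDimensional K (V i)] {i₀ : ι} {t : Finset ι}
    (hi₀ : i₀ ∉ t) :
    finrank K (V i₀) + ∑ i ∈ t, finrank K (V i) ≤
      finrank K ↥(V i₀ ⊔ t.sup V) + ∑ i ∈ t, finrank K ↥(V i ⊓ ⨆ j, ⨆ (_ : j ≠ i), V j) := by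
  induction t using Finset.cons_induction with
  | empty => rw [Finset.sum_empty, Finset.sum_empty, Finset.sup_empty, sup_bot_eq]
  | cons a t ha ih =>
    obtain ⟨hne, hi₀t⟩ : i₀ ≠ a ∧ i₀ ∉ t := by simpa using hi₀
    have earlier_le : V i₀ ⊔ t.sup V ≤ ⨆ j, ⨆ (_ : j ≠ a), V j :=
      sup_le (le_iSup₂_of_le i₀ hne le_rfl) <| Finset.sup_le fun j hj ↦
        le_iSup₂_of_le j (ne_of_mem_of_not_mem hj ha) le_rfl
    have adjoin := finrank_add_finrank_le_finrank_sup_add_finrank_inf (U := V a) earlier_le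
    rw [Finset.sum_cons, Finset.sum_cons, Finset.sup_cons, sup_left_comm]
    linarith [ih hi₀t]

theorem sum_finrank_le_finrank_iSup_add_sum_finrank_inf [Fintype ι] [DecidableEq ι]
    (V : ι → Submodule K E) [∀ i, FiniteDimensional K (V i)] (i₀ : ι) :
    ∑ i, finrank K (V i) ≤ finrank K ↥(⨆ i, V i) +
      ∑ i ∈ Finset.univ.erase i₀, finrank K ↥(V i ⊓ ⨆ j, ⨆ (_ : j ≠ i), V j) := by
  have h := finrank_add_sum_finrank_le_finrank_sup_add_sum_finrank_inf V
    (Finset.notMem_erase i₀ Finset.univ)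
  rwa [Finset.add_sum_erase _ (fun i ↦ finrank K (V i)) (Finset.mem_univ i₀), ← Finset.sup_insert,
    Finset.insert_erase (Finset.mem_univ i₀), Finset.sup_univ_eq_iSup] at h

theorem dim_sum_lower_bound_general [Fintype ι] [Nonempty ι] {d k : ℕ}
    (V : ι → Submodule K E) [∀ i, FiniteDimensional K (V i)]
    (hd : ∀ i, d ≤ finrank K (V i))
    (hk : ∀ i, finrank K ↥(V i ⊓ ⨆ j, ⨆ (_ : j ≠ i), V j) ≤ k) :
    (Fintype.card ι : ℤ) * ((d : ℤ) - (k : ℤ)) + (k : ℤ) ≤ (finrank K ↥(⨆ i, V i) : ℤ) := by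
  classical
  obtain ⟨i₀⟩ := ‹Nonempty ι›
  have card_pos : 1 ≤ Fintype.card ι := Fintype.card_pos_iff.mpr ⟨i₀⟩
  have bound : Fintype.card ι * d ≤ finrank K ↥(⨆ i, V i) + (Fintype.card ι - 1) * k :=
    calc Fintype.card ι * d
      _ ≤ ∑ i, finrank K (V i) := Finset.card_nsmul_le_sum _ _ d fun i _ ↦ hd i
      _ ≤ finrank K ↥(⨆ i, V i) +
          ∑ i ∈ Finset.univ.erase i₀, finrank K ↥(V i ⊓ ⨆ j, ⨆ (_ : j ≠ i), V j) :=
        sum_finrank_le_finrank_iSup_add_sum_finrank_inf V i₀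
      _ ≤ finrank K ↥(⨆ i, V i) + (Fintype.card ι - 1) * k := by
        gcongr
        simpa using Finset.sum_le_card_nsmul (Finset.univ.erase i₀) _ k fun i _ ↦ hk i
  zify [card_pos] at bound
  linarith

end Overlap

/-- Let `E` be a finite-dimensional ℂ-vector space, `m ≥ 1`,
`d, k ≥ 0`, and `V₁, …, V_m` subspaces of `E` with `dim V_i = d` for all `i` and
`dim(V_i ∩ ∑_{j≠i} V_j) ≤ k` for all `i`.  Then `dim(∑ V_i) ≥ m(d − k) + k`. -/
theorem dim_sum_lower_bound
    (E : Type*) [AddCommGroup E] [Module ℂ E] [FiniteDimensional ℂ E]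
    (m : ℕ) (hm : 1 ≤ m) (d k : ℕ)
    (V : Fin m → Submodule ℂ E)
    (hd : ∀ i, Module.finrank ℂ ↥(V i) = d)
    (hk : ∀ i, Module.finrank ℂ ↥(V i ⊓ ⨆ j, ⨆ (_ : j ≠ i), V j) ≤ k) :
    (m : ℤ) * ((d : ℤ) - (k : ℤ)) + (k : ℤ) ≤ (Module.finrank ℂ ↥(⨆ i, V i) : ℤ) := by
  have : Nonempty (Fin m) := ⟨⟨0, hm⟩⟩
  simpa using dim_sum_lower_bound_general V (fun i ↦ (hd i).ge) hk
end
end
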